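/- Fix n ≥ 1 and any injective function Φ from projective dependency trees on n words to binary head trees with n leaves satisfying bht2dep(Φ(t)) = t for all projective t. Then the composite encoding t ↦ hexatags(Φ(t)) is an injective map from the set of projective dependency trees on n words into the set of hexatag lists of length 2n − 1, and full decoding recovers the tree: for every projective dependency tree t on n words, the run of tags2bht on hexatags(Φ(t)) succeeds with output Φ(t), and bht2dep applied to that output equals t. -/

import Mathlib

/-- Binary head trees (BHTs). -/
inductive BHT : Type where
  | leaf : BHT
  | nodeL (l r : BHT) : BHT
  | nodeR (l r : BHT) : BHT

/-- Number of leaves of a BHT. -/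
def BHT.numLeaves : BHT → ℕ
  | .leaf => 1
  | .nodeL l r => l.numLeaves + r.numLeaves
  | .nodeR l r => l.numLeaves + r.numLeaves

/-- Head position of a BHT whose span of leaf positions starts at `i`. -/
def BHT.headAt : BHT → ℕ → ℕ
  | .leaf, i => i
  | .nodeL l _, i => l.headAt i
  | .nodeR l r, i => r.headAt (i + l.numLeaves)

/-- Head position of a BHT placed over positions `0, …, numLeaves - 1`. -/
def BHT.head (T : BHT) : ℕ := T.headAt 0

/-- Arc set of a BHT whose span of leaf positions starts at `i`. -/
def BHT.arcsAt : BHT → ℕ → Set (ℕ × ℕ)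
  | .leaf, _ => ∅
  | .nodeL l r, i =>
      insert (l.headAt i, r.headAt (i + l.numLeaves)) (l.arcsAt i ∪ r.arcsAt (i + l.numLeaves))
  | .nodeR l r, i =>
      insert (r.headAt (i + l.numLeaves), l.headAt i) (l.arcsAt i ∪ r.arcsAt (i + l.numLeaves))

/-- Arc set of a BHT placed over positions `0, …, numLeaves - 1`. -/
def BHT.arcs (T : BHT) : Set (ℕ × ℕ) := T.arcsAt 0

/-- `S` is a subtree of `T` (placed over positions `0, …, numLeaves - 1`) whose
leaf span starts at absolute position `i`. -/
inductive BHT.SubtreeAt : BHT → ℕ → BHT → Prop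
  | refl (T : BHT) : BHT.SubtreeAt T 0 T
  | inlL (l r S : BHT) (i : ℕ) : BHT.SubtreeAt l i S → BHT.SubtreeAt (BHT.nodeL l r) i S
  | inrL (l r S : BHT) (i : ℕ) :
      BHT.SubtreeAt r i S → BHT.SubtreeAt (BHT.nodeL l r) (l.numLeaves + i) S
  | inlR (l r S : BHT) (i : ℕ) : BHT.SubtreeAt l i S → BHT.SubtreeAt (BHT.nodeR l r) i S
  | inrR (l r S : BHT) (i : ℕ) :
      BHT.SubtreeAt r i S → BHT.SubtreeAt (BHT.nodeR l r) (l.numLeaves + i) S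

/-- `bht2dep T j = some i` if `i` is the unique position with `(i, j) ∈ arcs T`,
and `none` if `j` has no incoming arc. -/
noncomputable def bht2dep (n : ℕ) (T : BHT) : Fin n → Option (Fin n) := fun j =>
  letI := Classical.dec (∃! i : Fin n, ((i : ℕ), (j : ℕ)) ∈ T.arcs)
  if h : ∃! i : Fin n, ((i : ℕ), (j : ℕ)) ∈ T.arcs then some h.choose else none

/-- `head` is a dependency tree on `n` words: exactly one root (position with
`head r = none`), and every position reaches the root by iterating `head`. -/
def IsDepTree {n : ℕ} (head : Fin n → Option (Fin n)) : Prop :=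
  ∃ r : Fin n, head r = none ∧ (∀ r' : Fin n, head r' = none → r' = r) ∧
    ∀ j : Fin n, Relation.ReflTransGen (fun a b => head a = some b) j r

/-- A dependency tree is projective if every position's set of descendants is an
interval of consecutive positions. -/
def Projective {n : ℕ} (head : Fin n → Option (Fin n)) : Prop :=
  ∀ i : Fin n, ∃ a b : Fin n,
    ∀ j : Fin n, Relation.ReflTransGen (fun x y => head x = some y) j i ↔ (a ≤ j ∧ j ≤ b)

/-- The six hexatags: `tL`/`tR` are terminal tags (leaf that is a left/right child);
`leftL`/`leftR` are `⇐L`/`⇐R` (internal left child with head-label L/R);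
`rightL`/`rightR` are `⇒L`/`⇒R` (internal right child with head-label L/R). -/
inductive Hexatag : Type where
  | tL | tR | leftL | leftR | rightL | rightR
deriving DecidableEq

/-- A hexatag is terminal if it is `tL` or `tR`. -/
def Hexatag.isTerminal : Hexatag → Prop
  | .tL => True
  | .tR => True
  | _ => False

/-- In-order linearization; the Boolean records whether the current subtree is a
right child of its parent (the root counts as a left child by convention). -/
def BHT.hexatagsAux : BHT → Bool → List Hexatag
  | .leaf, false => [.tL]
  | .leaf, true => [.tR]
  | .nodeL l r, b =>
      l.hexatagsAux false ++ (if b then Hexatag.rightL else Hexatag.leftL) :: r.hexatagsAux true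
  | .nodeR l r, b =>
      l.hexatagsAux false ++ (if b then Hexatag.rightR else Hexatag.leftR) :: r.hexatagsAux true

/-- The hexatag linearization of a BHT. -/
def BHT.hexatags (T : BHT) : List Hexatag := T.hexatagsAux false

/-- The tags emitted for the leaves of a BHT, in left-to-right order. -/
def BHT.leafTagsAux : BHT → Bool → List Hexatag
  | .leaf, false => [.tL]
  | .leaf, true => [.tR]
  | .nodeL l r, _ => l.leafTagsAux false ++ r.leafTagsAux true
  | .nodeR l r, _ => l.leafTagsAux false ++ r.leafTagsAux true

/-- The tags emitted for the leaves of a BHT in left-to-right order (root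
counts as a left child by convention). -/
def BHT.leafTags (T : BHT) : List Hexatag := T.leafTagsAux false

/-- Partial BHTs: binary head trees possibly containing a dummy placeholder. -/
inductive PBHT : Type where
  | dummy : PBHT
  | leaf : PBHT
  | nodeL (l r : PBHT) : PBHT
  | nodeR (l r : PBHT) : PBHT
deriving DecidableEq

/-- Does a partial BHT contain a dummy? -/
def PBHT.hasDummy : PBHT → Bool
  | .dummy => true
  | .leaf => false
  | .nodeL l r => l.hasDummy || r.hasDummy
  | .nodeR l r => l.hasDummy || r.hasDummy

/-- Substitute `u` for the dummy in a partial BHT. -/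
def PBHT.subst : PBHT → PBHT → PBHT
  | .dummy, u => u
  | .leaf, _ => .leaf
  | .nodeL l r, u => .nodeL (l.subst u) (r.subst u)
  | .nodeR l r, u => .nodeR (l.subst u) (r.subst u)

/-- One step of the left-corner decoder on a stack of partial BHTs. -/
def hexStep : List PBHT → Hexatag → Option (List PBHT)
  | st, .tL => some (.leaf :: st)
  | t :: st, .tR => if t.hasDummy then some (t.subst .leaf :: st) else none
  | t :: st, .leftL => some (.nodeL t .dummy :: st)
  | t :: st, .leftR => some (.nodeR t .dummy :: st)
  | t :: u :: st, .rightL =>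
      if u.hasDummy then some (u.subst (.nodeL t .dummy) :: st) else none
  | t :: u :: st, .rightR =>
      if u.hasDummy then some (u.subst (.nodeR t .dummy) :: st) else none
  | _, _ => none

/-- The left-corner decoder: run the stack operations; succeed iff every
operation is defined and the final stack is a single dummy-free tree. -/
def tags2bht (τ : List Hexatag) : Option PBHT :=
  match τ.foldlM hexStep ([] : List PBHT) with
  | some [t] => if t.hasDummy then none else some t
  | _ => none

/-- Embedding of BHTs into partial BHTs. -/
def BHT.toPBHT : BHT → PBHT
  | .leaf => .leaf
  | .nodeL l r => .nodeL l.toPBHT r.toPBHT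
  | .nodeR l r => .nodeR l.toPBHT r.toPBHT

/-- Stack-count increment of a hexatag. -/
def Hexatag.delta : Hexatag → ℤ
  | .tL => 1
  | .tR => 0
  | .leftL => 0
  | .leftR => 0
  | .rightL => -1
  | .rightR => -1

/-- Running stack count `sₖ` after the first `k` tags of `τ`. -/
def stackCount (τ : List Hexatag) (k : ℕ) : ℤ :=
  ((τ.take k).map Hexatag.delta).sum

/-- Validity of a hexatag list (0-indexed: Lean index `k` is 1-indexed position `k+1`). -/
def ValidTags (τ : List Hexatag) : Prop :=
  (τ.length % 2 = 1 ∧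
    ∀ k : ℕ, ∀ t : Hexatag, τ[k]? = some t →
      (k % 2 = 0 → t.isTerminal) ∧ (k % 2 = 1 → ¬ t.isTerminal)) ∧
  τ[0]? = some Hexatag.tL ∧
  (∀ k : ℕ, ∀ t : Hexatag, τ[k]? = some t →
    (t = Hexatag.rightL ∨ t = Hexatag.rightR) → 2 ≤ stackCount τ k) ∧
  stackCount τ τ.length = 1

theorem BHT.hasDummy_toPBHT (T : BHT) : T.toPBHT.hasDummy = false := by
  induction T <;> simp_all [BHT.toPBHT, PBHT.hasDummy]

theorem BHT.subst_toPBHT (T : BHT) (u : PBHT) : T.toPBHT.subst u = T.toPBHT := by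
  induction T <;> simp_all [BHT.toPBHT, PBHT.subst]

theorem PBHT.subst_subst (t u v : PBHT) : (t.subst u).subst v = t.subst (u.subst v) := by
  induction t <;> simp_all [PBHT.subst]

theorem PBHT.hasDummy_subst (t u : PBHT) (ht : t.hasDummy = true) (hu : u.hasDummy = true) :
    (t.subst u).hasDummy = true := by
  induction t <;> simp_all [PBHT.subst, PBHT.hasDummy] <;> tauto

theorem BHT.toPBHT_injective : Function.Injective BHT.toPBHT := by
  intro a
  induction a with
  | leaf => intro b h; cases b <;> simp_all [BHT.toPBHT]
  | nodeL l r ihl ihr =>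
    intro b h
    cases b <;> simp [BHT.toPBHT] at h
    rw [ihl h.1, ihr h.2]
  | nodeR l r ihl ihr =>
    intro b h
    cases b <;> simp [BHT.toPBHT] at h
    rw [ihl h.1, ihr h.2]

theorem BHT.length_hexatagsAux (T : BHT) (b : Bool) :
    (T.hexatagsAux b).length + 1 = 2 * T.numLeaves := by
  induction T generalizing b with
  | leaf => cases b <;> rfl
  | nodeL l r ihl ihr =>
    have h1 := ihl false
    have h2 := ihr true
    simp only [BHT.hexatagsAux, BHT.numLeaves, List.length_append, List.length_cons]
    omega
  | nodeR l r ihl ihr =>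
    have h1 := ihl false
    have h2 := ihr true
    simp only [BHT.hexatagsAux, BHT.numLeaves, List.length_append, List.length_cons]
    omega

/-- Decoder invariant: a left subtree is pushed, a right subtree fills the dummy on top. -/
theorem BHT.foldlM_hexatagsAux (T : BHT) :
    (∀ st : List PBHT, (T.hexatagsAux false).foldlM hexStep st = some (T.toPBHT :: st)) ∧
    (∀ (u : PBHT) (st : List PBHT), u.hasDummy = true →
      (T.hexatagsAux true).foldlM hexStep (u :: st) = some (u.subst T.toPBHT :: st)) := by
  induction T with
  | leaf =>
    constructor
    · intro st; simp [BHT.hexatagsAux, hexStep, BHT.toPBHT]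
    · intro u st hu; simp [BHT.hexatagsAux, hexStep, BHT.toPBHT, hu]
  | nodeL l r ihl ihr =>
    constructor
    · intro st
      simp [BHT.hexatagsAux, List.foldlM_append, ihl.1, hexStep]
      rw [ihr.2 _ _ (by simp [PBHT.hasDummy])]
      simp [PBHT.subst, BHT.subst_toPBHT, BHT.toPBHT]
    · intro u st hu
      simp [BHT.hexatagsAux, List.foldlM_append, ihl.1, hexStep, hu]
      rw [ihr.2 _ _ (PBHT.hasDummy_subst _ _ hu (by simp [PBHT.hasDummy]))]
      simp [PBHT.subst_subst, PBHT.subst, BHT.subst_toPBHT, BHT.toPBHT]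
  | nodeR l r ihl ihr =>
    constructor
    · intro st
      simp [BHT.hexatagsAux, List.foldlM_append, ihl.1, hexStep]
      rw [ihr.2 _ _ (by simp [PBHT.hasDummy])]
      simp [PBHT.subst, BHT.subst_toPBHT, BHT.toPBHT]
    · intro u st hu
      simp [BHT.hexatagsAux, List.foldlM_append, ihl.1, hexStep, hu]
      rw [ihr.2 _ _ (PBHT.hasDummy_subst _ _ hu (by simp [PBHT.hasDummy]))]
      simp [PBHT.subst_subst, PBHT.subst, BHT.subst_toPBHT, BHT.toPBHT]

theorem BHT.tags2bht_hexatags (T : BHT) : tags2bht T.hexatags = some T.toPBHT := by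
  simp [tags2bht, BHT.hexatags, (BHT.foldlM_hexatagsAux T).1, BHT.hasDummy_toPBHT]

theorem encode_decode_projective (n : ℕ) (hn : 1 ≤ n)
    (Φ : {t : Fin n → Option (Fin n) // IsDepTree t ∧ Projective t} → BHT)
    (hΦinj : Function.Injective Φ)
    (hΦn : ∀ t, (Φ t).numLeaves = n)
    (hΦdep : ∀ t, bht2dep n (Φ t) = t.val) :
    Function.Injective (fun t : {t : Fin n → Option (Fin n) // IsDepTree t ∧ Projective t} =>
      (Φ t).hexatags) ∧
    (∀ t : {t : Fin n → Option (Fin n) // IsDepTree t ∧ Projective t},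
      ((Φ t).hexatags).length = 2 * n - 1) ∧
    (∀ t : {t : Fin n → Option (Fin n) // IsDepTree t ∧ Projective t},
      tags2bht (Φ t).hexatags = some (Φ t).toPBHT ∧ bht2dep n (Φ t) = t.val) := by
  refine ⟨?_, ?_, fun t => ⟨BHT.tags2bht_hexatags _, hΦdep t⟩⟩
  · intro s t h
    apply hΦinj
    apply BHT.toPBHT_injective
    have h' : (Φ s).hexatags = (Φ t).hexatags := h
    have h1 := BHT.tags2bht_hexatags (Φ s)
    rw [h', BHT.tags2bht_hexatags] at h1
    exact (Option.some.inj h1).symm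
  · intro t
    have h1 := BHT.length_hexatagsAux (Φ t) false
    rw [hΦn t] at h1
    simp only [BHT.hexatags]
    omega
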